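/- Let z(n,k) denote the number of ordered labeled trees on the vertex set {0,1,...,n} that consist of a decreasing tree with k edges (i.e., the maximal decreasing subtree from the root) together with n-k additional increasing leaves attached to vertices of that decreasing tree. Then for all integers n, k with 1 ≤ k < n, the recursion z(n,k) = n·z(n-1,k) + (n+k-1)·z(n-1,k-1) holds. -/

import Mathlib

/-- An ordered labeled tree: a root label together with an ordered list of subtrees. -/
inductive OTree : Type
  | node : ℕ → List OTree → OTree

namespace OTree

/-- The label of the root. -/
def root : OTree → ℕ
  | node a _ => a

/-- The list of subtrees of the root (in order). -/
def children : OTree → List OTree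
  | node _ ts => ts

mutual
  /-- The list of all vertex labels of the tree. -/
  def labels : OTree → List ℕ
    | node a ts => a :: labelsList ts
  def labelsList : List OTree → List ℕ
    | [] => []
    | t :: ts => labels t ++ labelsList ts
end

/-- The number of vertices of the tree. -/
def size (T : OTree) : ℕ := T.labels.length

mutual
  /-- The maximal decreasing subtree from the root: keep exactly the children whose
  label is smaller than their parent's label, recursively. -/
  def md : OTree → OTree
    | node a ts => node a (mdList a ts)
  def mdList : ℕ → List OTree → List OTree
    | _, [] => []
    | a, t :: ts => (if t.root < a then [md t] else []) ++ mdList a ts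
end

mutual
  /-- `IsZ T` states that every vertex of `T` not in the maximal decreasing subtree is a
  leaf (attached by an increasing edge to a vertex of the maximal decreasing subtree). -/
  def IsZ : OTree → Prop
    | node a ts => IsZList a ts
  def IsZList : ℕ → List OTree → Prop
    | _, [] => True
    | a, t :: ts => (if t.root < a then IsZ t else t.children = []) ∧ IsZList a ts
end

/-- `T.OnRange n` : the vertices of `T` are labeled by distinct labels and the set of
labels is exactly `{0, 1, …, n}`. -/
def OnRange (T : OTree) (n : ℕ) : Prop :=
  T.labels.Nodup ∧ ∀ i, i ∈ T.labels ↔ i ≤ n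

end OTree

/-- `T` is a member of `Z_{n,k}`: an ordered labeled tree on `{0,…,n}` consisting of a
decreasing tree with `k` edges (its maximal decreasing subtree, with `k+1` vertices)
together with `n-k` additional increasing leaves attached to it. -/
def MemZ (T : OTree) (n k : ℕ) : Prop :=
  T.OnRange n ∧ T.md.size = k + 1 ∧ T.IsZ

/-!
Let `m` be the smallest label, which for `k ≥ 1` is not at the root. As `m` is smaller than all
other labels, it is attached to its parent by a decreasing edge, and all its children are
increasing leaves.

* If `m` has no child, delete it. A tree whose decreasing part has `k - 1` edges and which has
  `n` vertices arises `n + k - 1` times: a vertex with `d` children offers `d + 1` places for the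
  new child `m`, and summing over the `k` vertices of the decreasing part counts each of the
  `n - 1` other vertices once as a child.
* If `m` has a child, delete the first one, a leaf `c`. The decreasing part is unchanged, `m`
  remains the smallest label, and the deleted leaf can be put back, so every label `c ≠ m`
  occurs equally often.
-/

namespace OTree

attribute [local simp] root children labels labelsList md mdList IsZ IsZList size

theorem forest_induction {P : List OTree → Prop} (nil : P [])
    (cons : ∀ a us ts, P us → P ts → P (node a us :: ts)) : ∀ ts, P ts
  | [] => nil
  | node a us :: ts => cons a us ts (forest_induction nil cons us) (forest_induction nil cons ts)

theorem labelsList_append (ts us : List OTree) :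
    labelsList (ts ++ us) = labelsList ts ++ labelsList us := by
  induction ts with
  | nil => simp
  | cons t ts ih => simp [ih]

theorem mdList_eq_nil {a : ℕ} {ts : List OTree} (h : ∀ x ∈ labelsList ts, a ≤ x) :
    mdList a ts = [] := by
  induction ts with
  | nil => simp
  | cons t ts ih =>
    obtain ⟨b, us⟩ := t
    have hab : ¬b < a := (h b (by simp)).not_gt
    simpa [hab] using ih fun x hx => h x (by simp [hx])

theorem isZList_iff_of_le {a : ℕ} {ts : List OTree} (h : ∀ x ∈ labelsList ts, a ≤ x) :
    IsZList a ts ↔ ∀ t ∈ ts, t.children = [] := by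
  induction ts with
  | nil => simp
  | cons t ts ih =>
    obtain ⟨b, us⟩ := t
    have hab : ¬b < a := (h b (by simp)).not_gt
    simp [hab, ih fun x hx => h x (by simp [hx])]

/-- The trees that consist of a decreasing tree with `k` edges and increasing leaves attached to
it, with vertex set an arbitrary finite set `S`; the equality of multisets says that every element
of `S` labels exactly one vertex. -/
def zTrees (S : Finset ℕ) (k : ℕ) : Set OTree :=
  {T | (T.labels : Multiset ℕ) = S.val ∧ T.md.size = k + 1 ∧ T.IsZ}

theorem memZ_iff_mem_zTrees {T : OTree} {n k : ℕ} :
    MemZ T n k ↔ T ∈ zTrees (Finset.range (n + 1)) k := by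
  refine and_congr_left fun _ => ⟨fun h => ?_, fun h => ⟨?_, fun i => ?_⟩⟩
  · exact (Multiset.Nodup.ext (Multiset.coe_nodup.2 h.1) (Finset.nodup _)).2 fun i => by
      rw [Multiset.mem_coe, h.2, Finset.mem_val, Finset.mem_range, Nat.lt_succ_iff]
  · exact Multiset.coe_nodup.1 (h ▸ Finset.nodup _)
  · rw [← Multiset.mem_coe, h, Finset.mem_val, Finset.mem_range, Nat.lt_succ_iff]

theorem finite_forests (S : Finset ℕ) (m : ℕ) :
    {ts | (∀ x ∈ labelsList ts, x ∈ S) ∧ (labelsList ts).length ≤ m}.Finite := by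
  induction m with
  | zero =>
    refine (Set.finite_singleton []).subset ?_
    rintro (_ | ⟨⟨a, us⟩, ts⟩) ⟨-, h⟩ <;> simp_all
  | succ m ih =>
    refine (((S.finite_toSet.prod (ih.prod ih)).image
      fun p => node p.1 p.2.1 :: p.2.2).insert []).subset ?_
    rintro (_ | ⟨⟨a, us⟩, ts⟩) ⟨hS, hm⟩
    · simp
    · simp only [labelsList, labels, List.mem_append, List.mem_cons, List.length_append,
        List.length_cons] at hS hm
      have hus : (labelsList us).length ≤ m := by omega
      have hts : (labelsList ts).length ≤ m := by omega
      exact .inr ⟨(a, us, ts), ⟨hS a (.inl (.inl rfl)), ⟨fun x hx => hS x (.inl (.inr hx)), hus⟩,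
        fun x hx => hS x (.inr hx), hts⟩, rfl⟩

theorem finite_zTrees (S : Finset ℕ) (k : ℕ) : (zTrees S k).Finite := by
  refine ((finite_forests S S.card).preimage (f := fun T => [T]) (by simp)).subset fun T hT => ?_
  have hlabels := hT.1
  refine ⟨fun x hx => ?_, ?_⟩
  · rwa [← Finset.mem_val, ← hlabels, Multiset.mem_coe, ← List.append_nil T.labels]
  · simp [Finset.card, ← hlabels]

/-- The tree obtained from a tree by applying `f` to every label. -/
def map (f : ℕ → ℕ) : OTree → OTree
  | node a ts => node (f a) (ts.map (map f))

theorem map_injective {f : ℕ → ℕ} (hf : f.Injective) : (map f).Injective := by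
  have aux (ts us : List OTree) : ts.map (map f) = us.map (map f) → ts = us := by
    induction ts using forest_induction generalizing us with
    | nil => cases us <;> simp
    | cons a ts ts' ih ih' =>
      rcases us with _ | ⟨⟨b, us⟩, us'⟩
      · simp
      · simp only [List.map_cons, map, List.cons.injEq, node.injEq, hf.eq_iff, and_imp]
        exact fun hab h h' => ⟨⟨hab, ih _ h⟩, ih' _ h'⟩
  exact fun T T' h => by simpa using aux [T] [T'] (by simpa using h)

theorem exists_map_eq {f : ℕ → ℕ} {T : OTree} (h : ∀ x ∈ T.labels, x ∈ Set.range f) :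
    ∃ T', map f T' = T := by
  have aux (ts : List OTree) (h : ∀ x ∈ labelsList ts, x ∈ Set.range f) :
      ∃ ts' : List OTree, ts'.map (map f) = ts := by
    induction ts using forest_induction with
    | nil => exact ⟨[], rfl⟩
    | cons a us ts ihus ihts =>
      obtain ⟨us, rfl⟩ := ihus fun x hx => h x (by simp [hx])
      obtain ⟨ts, rfl⟩ := ihts fun x hx => h x (by simp [hx])
      obtain ⟨a, rfl⟩ := h a (by simp)
      exact ⟨node a us :: ts, by simp [map]⟩
  obtain ⟨a, ts⟩ := T
  obtain ⟨ts, rfl⟩ := aux ts fun x hx => h x (by simp [hx])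
  obtain ⟨a, rfl⟩ := h a (by simp)
  exact ⟨node a ts, by simp [map]⟩

theorem labelsList_map (f : ℕ → ℕ) (ts : List OTree) :
    labelsList (ts.map (map f)) = (labelsList ts).map f := by
  induction ts using forest_induction with
  | nil => simp
  | cons a us ts ihus ihts => simp [map, ihus, ihts]

theorem labels_map (f : ℕ → ℕ) (T : OTree) : (map f T).labels = T.labels.map f := by
  simpa using labelsList_map f [T]

theorem mdList_map (f : ℕ ↪o ℕ) (a : ℕ) (ts : List OTree) :
    mdList (f a) (ts.map (map f)) = (mdList a ts).map (map f) := by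
  induction ts using forest_induction generalizing a with
  | nil => simp
  | cons b us ts ihus ihts => by_cases h : b < a <;> simp [map, ihus, ihts, h]

theorem size_md_map (f : ℕ ↪o ℕ) (T : OTree) : (map f T).md.size = T.md.size := by
  cases T
  simp [map, mdList_map, labelsList_map]

theorem isZList_map (f : ℕ ↪o ℕ) (a : ℕ) (ts : List OTree) :
    IsZList (f a) (ts.map (map f)) ↔ IsZList a ts := by
  induction ts using forest_induction generalizing a with
  | nil => simp
  | cons b us ts ihus ihts => by_cases h : b < a <;> simp [map, ihus, ihts, h]

theorem isZ_map (f : ℕ ↪o ℕ) (T : OTree) : (map f T).IsZ ↔ T.IsZ := by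
  cases T
  simp [map, isZList_map]

theorem zTrees_map (f : ℕ ↪o ℕ) (S : Finset ℕ) (k : ℕ) :
    zTrees (S.map f.toEmbedding) k = map f '' zTrees S k := by
  have map_mem (T : OTree) : map f T ∈ zTrees (S.map f.toEmbedding) k ↔ T ∈ zTrees S k := by
    simp only [zTrees, Set.mem_ofPred_eq, size_md_map, isZ_map, labels_map, Finset.map_val,
      ← Multiset.map_coe]
    exact and_congr_left fun _ => (Multiset.map_injective f.injective).eq_iff
  refine Set.Subset.antisymm (fun T hT => ?_) (Set.image_subset_iff.2 fun T => (map_mem T).2)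
  obtain ⟨T, rfl⟩ : ∃ T', map f T' = T := exists_map_eq fun x hx => by
    rw [← Multiset.mem_coe, hT.1, Finset.mem_val] at hx
    obtain ⟨y, -, rfl⟩ := Finset.mem_map.1 hx
    exact ⟨y, rfl⟩
  exact ⟨T, (map_mem T).1 hT, rfl⟩

/-- The order embedding of `ℕ` into itself that misses exactly `c`. -/
def skip (c : ℕ) : ℕ ↪o ℕ :=
  OrderEmbedding.ofStrictMono (fun i => if i < c then i else i + 1) fun i j h => by
    dsimp only
    split_ifs <;> omega

theorem skip_apply (c i : ℕ) : skip c i = if i < c then i else i + 1 := rfl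

theorem map_skip_range {n c : ℕ} (hc : c ≤ n) :
    (Finset.range n).map (skip c).toEmbedding = (Finset.range (n + 1)).erase c := by
  ext x
  simp only [Finset.mem_map, Finset.mem_range, RelEmbedding.coe_toEmbedding, skip_apply,
    Finset.mem_erase]
  constructor
  · rintro ⟨i, hi, rfl⟩
    split_ifs <;> omega
  · rintro ⟨hxc, hxn⟩
    refine ⟨if x < c then x else x - 1, ?_⟩
    split_ifs <;> omega

theorem ncard_zTrees_erase_range {n c : ℕ} (hc : c ≤ n) (k : ℕ) :
    (zTrees ((Finset.range (n + 1)).erase c) k).ncard = (zTrees (Finset.range n) k).ncard := by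
  rw [← map_skip_range hc, zTrees_map,
    Set.ncard_image_of_injective _ (map_injective (skip c).injective)]

/-- A forest with a hole between two siblings, or before the first or after the last one. It records
the position of a vertex in a forest. -/
inductive Context : Type
  | hole (ts : List OTree)
  | inside (a : ℕ) (C : Context) (ts : List OTree)
  | after (t : OTree) (C : Context)

namespace Context

/-- The forest obtained by putting the forest `F` into the hole. -/
def fill : Context → List OTree → List OTree
  | hole ts, F => F ++ ts
  | inside a C ts, F => node a (C.fill F) :: ts
  | after t C, F => t :: C.fill F

/-- The path to the hole from a parent of the whole forest with label `a` is decreasing. -/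
def IsDecreasing : ℕ → Context → Prop
  | _, hole _ => True
  | a, inside b C _ => b < a ∧ C.IsDecreasing b
  | a, after _ C => C.IsDecreasing a

attribute [local simp] fill IsDecreasing

theorem labelsList_fill_perm (C : Context) (F : List OTree) :
    (labelsList (C.fill F)).Perm (labelsList F ++ labelsList (C.fill [])) := by
  induction C with
  | hole ts => simp [labelsList_append]
  | inside a C ts ih =>
    simpa using ((ih.cons a).trans List.perm_middle.symm).append_right (labelsList ts)
  | after t C ih => simpa using (ih.append_left t.labels).trans (List.perm_append_comm_assoc ..)

theorem exists_fill_eq {x : ℕ} {ts : List OTree} (hx : x ∈ labelsList ts) :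
    ∃ (C : Context) (us : List OTree), C.fill [node x us] = ts := by
  induction ts using forest_induction with
  | nil => simp at hx
  | cons a us ts ihus ihts =>
    simp only [labelsList, labels, List.mem_append, List.mem_cons] at hx
    rcases hx with (rfl | hx) | hx
    · exact ⟨hole ts, us, by simp⟩
    · obtain ⟨C, vs, rfl⟩ := ihus hx
      exact ⟨inside a C ts, vs, by simp⟩
    · obtain ⟨C, vs, rfl⟩ := ihts hx
      exact ⟨after (node a us) C, vs, by simp⟩

theorem mem_labelsList_fill (C : Context) (x : ℕ) (us : List OTree) :
    x ∈ labelsList (C.fill [node x us]) :=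
  (C.labelsList_fill_perm _).mem_iff.2 (by simp)

-- As `x` occurs only once in the common forest, both holes must lie in the same branch.
theorem eq_of_fill_singleton_eq {x : ℕ} {C D : Context} {us vs : List OTree}
    (hC : x ∉ labelsList (C.fill [])) (hD : x ∉ labelsList (D.fill []))
    (h : C.fill [node x us] = D.fill [node x vs]) : C = D ∧ us = vs := by
  induction C generalizing D with
  | hole ts => cases D <;> grind [fill, labelsList, labels]
  | inside a C ts ih =>
    have hx := C.mem_labelsList_fill x us
    cases D <;> grind [fill, labelsList, labels]
  | after t C ih =>
    cases D <;> grind [fill, labelsList, labels, mem_labelsList_fill]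

theorem fill_singleton_ne_nil (C : Context) (t : OTree) : C.fill [t] ≠ [] := by
  cases C <;> simp

theorem isZList_fill {a : ℕ} {C : Context} {t : OTree}
    (h : ∀ x ∈ a :: labelsList (C.fill []), t.root < x) :
    IsZList a (C.fill [t]) ↔ C.IsDecreasing a ∧ t.IsZ ∧ IsZList a (C.fill []) := by
  induction C generalizing a with
  | hole ts => simp_all
  | inside b C ts ih =>
    simp only [fill, labelsList, labels, List.mem_cons, List.mem_append] at h
    by_cases hb : b < a
    · have ih := @ih b (by grind)
      simp only [fill, IsZList, root, hb, if_true, IsZ, ih, IsDecreasing, true_and]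
      tauto
    · simp [hb, fill_singleton_ne_nil]
  | after u C ih =>
    have ih := @ih a (by simp_all)
    simp only [fill, IsZList, ih, IsDecreasing]
    tauto

theorem length_mdList_fill {a : ℕ} {C : Context} {t : OTree} (hC : C.IsDecreasing a)
    (h : ∀ x ∈ a :: labelsList (C.fill []), t.root < x) :
    (labelsList (mdList a (C.fill [t]))).length =
      t.md.size + (labelsList (mdList a (C.fill []))).length := by
  induction C generalizing a with
  | hole ts => simp_all
  | inside b C ts ih =>
    simp only [fill, labelsList, labels, List.mem_cons, List.mem_append] at h
    have ih := @ih b hC.2 (by grind)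
    simp only [fill, mdList, root, hC.1, if_true, md, List.cons_append, List.nil_append, labelsList,
      labels, List.length_cons, List.length_append, ih]
    omega
  | after u C ih =>
    have ih := @ih a hC (by simp_all)
    simp only [fill, mdList, labelsList_append, List.length_append, ih]
    omega

end Context

open Context

attribute [local simp] fill IsDecreasing

/-- The holes in the forest `ts` below the root `a` such that the path to the hole is decreasing:
these are the places where a new smallest label can be attached to the tree `node a ts`. -/
def decreasingContexts (a : ℕ) (ts : List OTree) : Set Context :=
  {C | C.IsDecreasing a ∧ C.fill [] = ts}

theorem decreasingContexts_nil (a : ℕ) : decreasingContexts a [] = {hole []} := by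
  ext C
  cases C <;> simp [decreasingContexts]

theorem decreasingContexts_cons (a b : ℕ) (us ts : List OTree) :
    decreasingContexts a (node b us :: ts) =
      insert (hole (node b us :: ts))
        ((inside b · ts) '' {C ∈ decreasingContexts b us | b < a} ∪
          after (node b us) '' decreasingContexts a ts) := by
  ext C
  simp only [decreasingContexts, Set.mem_ofPred_eq, Set.mem_insert_iff, Set.mem_union,
    Set.mem_image]
  cases C <;> grind [fill, IsDecreasing]

theorem encard_decreasingContexts {a : ℕ} {ts : List OTree} (h : IsZList a ts) :
    (decreasingContexts a ts).encard =
      (labelsList ts).length + (labelsList (mdList a ts)).length + 1 := by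
  induction ts using forest_induction generalizing a with
  | nil => simp [decreasingContexts_nil]
  | cons b us ts ihus ihts =>
    have inside_injective : (inside b · ts).Injective := fun C D => by simp
    have after_injective : (after (node b us)).Injective := fun C D => by simp
    have disj : Disjoint ((inside b · ts) '' {C ∈ decreasingContexts b us | b < a})
        (after (node b us) '' decreasingContexts a ts) :=
      Set.disjoint_image_image fun _ _ _ _ => Context.noConfusion
    rw [decreasingContexts_cons, Set.encard_insert_of_notMem (by simp), Set.encard_union_eq disj,
      inside_injective.encard_image, after_injective.encard_image, ihts h.2]
    by_cases hb : b < a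
    · have hus : IsZList b us := by simpa [hb] using h.1
      simp only [hb, and_true, Set.ofPred_mem_eq, ihus hus, labelsList, labels, mdList, root,
        reduceIte, md, labelsList_append, List.length_append, List.length_cons, List.length_nil]
      push_cast
      ring
    · obtain rfl : us = [] := by simpa [hb] using h.1
      simp only [hb, and_false, Set.ofPred_false, Set.encard_empty, labelsList, labels,
        mdList, root, reduceIte, List.cons_append, List.nil_append, List.length_cons]
      push_cast
      ring

variable {S : Finset ℕ} {m k : ℕ}

theorem encard_decreasingContexts_of_mem_zTrees {T : OTree} (hT : T ∈ zTrees S k) :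
    (decreasingContexts T.root T.children).encard = (S.card + k : ℕ) := by
  obtain ⟨a, ts⟩ := T
  obtain ⟨hlabels, hsize, hZ⟩ := hT
  have hcard : S.card = (labelsList ts).length + 1 := by simp [Finset.card, ← hlabels]
  have hsize : (labelsList (mdList a ts)).length = k := by simpa using hsize
  simp only [root, children, encard_decreasingContexts hZ, hcard, hsize]
  push_cast
  ring

theorem eq_erase_val_iff {l : Multiset ℕ} {c : ℕ} (hc : c ∈ S) :
    l = (S.erase c).val ↔ c ::ₘ l = S.val := by
  rw [Finset.erase_val, ← Multiset.cons_inj_right c, Multiset.cons_erase hc]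

/-- Every vertex of a tree except the root is described by the label of the root, the position of
the vertex, and its children; this is the tree with `m` at that vertex. -/
def graft (m : ℕ) (x : ℕ × Context × List OTree) : OTree :=
  node x.1 (x.2.1.fill [node m x.2.2])

theorem coe_labels_graft (m a : ℕ) (C : Context) (us : List OTree) :
    ((graft m (a, C, us)).labels : Multiset ℕ) =
      m ::ₘ (labelsList us + (node a (C.fill [])).labels : Multiset ℕ) := by
  have hfill : (labelsList (C.fill [node m us]) : Multiset ℕ) =
      labelsList [node m us] + labelsList (C.fill []) :=
    Multiset.coe_eq_coe.2 (C.labelsList_fill_perm _)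
  simp only [graft, labels, ← Multiset.cons_coe, hfill, Multiset.add_cons, labelsList,
    List.append_nil, Multiset.cons_add]
  exact Multiset.cons_swap ..

theorem lt_of_labels_graft (hm : ∀ x ∈ S, m ≤ x) {a : ℕ} {C : Context} {us : List OTree}
    (h : m ::ₘ (labelsList us + (node a (C.fill [])).labels : Multiset ℕ) = S.val) {x : ℕ}
    (hx : x ∈ labelsList us ∨ x ∈ a :: labelsList (C.fill [])) : m < x := by
  have hnodup := h ▸ S.nodup
  have hmem : x ∈ (labelsList us + (node a (C.fill [])).labels : Multiset ℕ) :=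
    Multiset.mem_add.2 hx
  refine (hm x ?_).lt_of_ne ?_
  · rw [← Finset.mem_val, ← h]
    exact Multiset.mem_cons_of_mem hmem
  · rintro rfl
    exact (Multiset.nodup_cons.1 hnodup).1 hmem

theorem graft_mem_zTrees_iff (hm : ∀ x ∈ S, m ≤ x) {a : ℕ} {C : Context} {us : List OTree} :
    graft m (a, C, us) ∈ zTrees S k ↔
      m ::ₘ (labelsList us + (node a (C.fill [])).labels : Multiset ℕ) = S.val ∧
        C.IsDecreasing a ∧ (∀ u ∈ us, u.children = []) ∧ (node a (C.fill [])).IsZ ∧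
          (node a (C.fill [])).md.size = k := by
  simp only [zTrees, Set.mem_ofPred_eq, coe_labels_graft]
  refine and_congr_right fun h => ?_
  have hlt {x : ℕ} := lt_of_labels_graft hm h (x := x)
  have hus : ∀ x ∈ labelsList us, m ≤ x := fun x hx => (hlt (.inl hx)).le
  have hsize (hC : C.IsDecreasing a) :
      (graft m (a, C, us)).md.size = (node a (C.fill [])).md.size + 1 := by
    simp [graft, length_mdList_fill (t := node m us) hC fun _ hx => hlt (.inr hx),
      mdList_eq_nil hus, add_comm]
  have hZ : (graft m (a, C, us)).IsZ ↔
      C.IsDecreasing a ∧ (∀ u ∈ us, u.children = []) ∧ (node a (C.fill [])).IsZ := by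
    simp only [graft, IsZ, isZList_fill (t := node m us) fun _ hx => hlt (.inr hx),
      isZList_iff_of_le hus]
  grind

theorem graft_nil_mem_zTrees_iff (hm : IsLeast (S : Set ℕ) m) {a : ℕ} {C : Context} :
    graft m (a, C, []) ∈ zTrees S (k + 1) ↔
      C.IsDecreasing a ∧ node a (C.fill []) ∈ zTrees (S.erase m) k := by
  rw [graft_mem_zTrees_iff hm.2]
  simp only [zTrees, Set.mem_ofPred_eq, eq_erase_val_iff hm.1, labelsList, Multiset.coe_nil,
    zero_add, List.not_mem_nil]
  grind

theorem graft_cons_mem_zTrees_iff (hm : ∀ x ∈ S, m ≤ x) {a c : ℕ} {C : Context} {us : List OTree}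
    (hc : c ∈ S) :
    graft m (a, C, node c [] :: us) ∈ zTrees S k ↔ graft m (a, C, us) ∈ zTrees (S.erase c) k := by
  have hlabels : (labelsList (node c [] :: us) : Multiset ℕ) = c ::ₘ labelsList us := by simp
  rw [graft_mem_zTrees_iff hm, graft_mem_zTrees_iff fun x hx => hm x (Finset.mem_of_mem_erase hx),
    eq_erase_val_iff hc, Multiset.cons_swap, hlabels, Multiset.cons_add]
  simp

theorem exists_eq_leaf_of_graft_cons_mem_zTrees (hm : ∀ x ∈ S, m ≤ x) {a : ℕ} {C : Context}
    {u : OTree} {us : List OTree} (h : graft m (a, C, u :: us) ∈ zTrees S k) :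
    ∃ c ∈ S.erase m, u = node c [] := by
  obtain ⟨hlabels, -, hus, -⟩ := (graft_mem_zTrees_iff hm).1 h
  obtain ⟨c, vs⟩ := u
  obtain rfl : vs = [] := hus (node c vs) (by simp)
  have hc : m < c := lt_of_labels_graft hm hlabels (.inl (by simp))
  refine ⟨c, Finset.mem_erase.2 ⟨hc.ne', ?_⟩, rfl⟩
  rw [← Finset.mem_val, ← hlabels]
  simp

theorem root_ne_of_mem_zTrees (hm : ∀ x ∈ S, m ≤ x) {T : OTree} (hT : T ∈ zTrees S (k + 1)) :
    T.root ≠ m := by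
  obtain ⟨a, ts⟩ := T
  rintro rfl
  have hroot : mdList a ts = [] := mdList_eq_nil fun x hx => hm x <| by
    rw [← Finset.mem_val, ← hT.1]
    simp [hx]
  simpa [hroot] using hT.2.1

theorem injOn_graft (hm : ∀ x ∈ S, m ≤ x) :
    Set.InjOn (graft m) (graft m ⁻¹' zTrees S k) := by
  rintro ⟨a, C, us⟩ hx ⟨b, D, vs⟩ hy hxy
  have hC : m ∉ labelsList (C.fill []) := fun h =>
    (lt_of_labels_graft hm ((graft_mem_zTrees_iff hm).1 hx).1 (.inr (by simp [h]))).false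
  have hD : m ∉ labelsList (D.fill []) := fun h =>
    (lt_of_labels_graft hm ((graft_mem_zTrees_iff hm).1 hy).1 (.inr (by simp [h]))).false
  simp only [graft, node.injEq] at hxy
  obtain ⟨rfl, rfl⟩ := eq_of_fill_singleton_eq hC hD hxy.2
  rw [hxy.1]

theorem image_preimage_graft (hm : IsLeast (S : Set ℕ) m) :
    graft m '' (graft m ⁻¹' zTrees S (k + 1)) = zTrees S (k + 1) := by
  refine Set.image_preimage_eq_of_subset fun T hT => ?_
  have hroot : m ≠ T.root := (root_ne_of_mem_zTrees hm.2 hT).symm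
  obtain ⟨a, ts⟩ := T
  have hmem : m ∈ labelsList ts := by
    have : m ∈ (node a ts).labels := by
      rw [← Multiset.mem_coe, hT.1]
      exact hm.1
    exact (List.mem_cons.1 this).resolve_left hroot
  obtain ⟨C, us, rfl⟩ := exists_fill_eq hmem
  exact ⟨(a, C, us), rfl⟩

theorem ncard_preimage_graft (hm : IsLeast (S : Set ℕ) m) :
    (graft m ⁻¹' zTrees S (k + 1)).ncard = (zTrees S (k + 1)).ncard := by
  rw [← (injOn_graft hm.2).ncard_image, image_preimage_graft hm]

theorem finite_preimage_graft (hm : ∀ x ∈ S, m ≤ x) : (graft m ⁻¹' zTrees S k).Finite :=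
  (finite_zTrees S k).preimage (injOn_graft hm)

/-- The ways to attach a new smallest label as a leaf, by a decreasing path, to a tree
of `zTrees S k`: the label of the root and the place of the new leaf. -/
def leafPlaces (S : Finset ℕ) (k : ℕ) : Set (ℕ × Context) :=
  {x | x.2.IsDecreasing x.1 ∧ node x.1 (x.2.fill []) ∈ zTrees S k}

theorem ncard_leafPlaces (S : Finset ℕ) (k : ℕ) :
    (leafPlaces S k).ncard = (S.card + k) * (zTrees S k).ncard := by
  have e : leafPlaces S k ≃ Σ T : zTrees S k, decreasingContexts T.1.root T.1.children :=
    { toFun x := ⟨⟨_, x.2.2⟩, x.1.2, x.2.1, rfl⟩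
      invFun
        | ⟨⟨node a ts, h⟩, C, hC⟩ => ⟨(a, C), hC.1, by obtain ⟨-, rfl⟩ := hC; exact h⟩
      left_inv x := rfl
      right_inv := by
        rintro ⟨⟨⟨a, ts⟩, h⟩, C, hC, hfill⟩
        obtain rfl : C.fill [] = ts := hfill
        rfl }
  have card_fiber (T : zTrees S k) :
      Nat.card (decreasingContexts T.1.root T.1.children) = S.card + k := by
    rw [Nat.card_coe_set_eq, Set.ncard, encard_decreasingContexts_of_mem_zTrees T.2,
      ENat.toNat_natCast]
  have (T : zTrees S k) : Finite (decreasingContexts T.1.root T.1.children) :=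
    Set.finite_of_encard_eq_coe (encard_decreasingContexts_of_mem_zTrees T.2)
  have := (finite_zTrees S k).fintype
  simp only [← Nat.card_coe_set_eq, Nat.card_congr e, Nat.card_sigma, card_fiber,
    Finset.sum_const, Finset.card_univ, Nat.card_eq_fintype_card, smul_eq_mul, mul_comm]

/-- Adding a new leaf `c` in front of the children of the vertex described by `x`. -/
def prependLeaf (c : ℕ) (x : ℕ × Context × List OTree) : ℕ × Context × List OTree :=
  (x.1, x.2.1, node c [] :: x.2.2)

theorem prependLeaf_injective (c : ℕ) : (prependLeaf c).Injective := fun x y => by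
  simp [prependLeaf, Prod.ext_iff]

theorem preimage_graft_eq_union (hm : IsLeast (S : Set ℕ) m) :
    graft m ⁻¹' zTrees S (k + 1) =
      (fun x => (x.1, x.2, [])) '' leafPlaces (S.erase m) k ∪
        ⋃ c ∈ (S.erase m : Set ℕ), prependLeaf c '' (graft m ⁻¹' zTrees (S.erase c) (k + 1)) := by
  ext ⟨a, C, us⟩
  simp only [Set.mem_preimage, Set.mem_union, Set.mem_image, Set.mem_iUnion, Prod.exists,
    Prod.mk.injEq, exists_prop, prependLeaf]
  constructor
  · intro h
    rcases us with _ | ⟨u, us⟩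
    · exact .inl ⟨a, C, (graft_nil_mem_zTrees_iff hm).1 h, rfl, rfl, rfl⟩
    · obtain ⟨c, hc, rfl⟩ := exists_eq_leaf_of_graft_cons_mem_zTrees hm.2 h
      exact .inr ⟨c, hc, a, C, us,
        (graft_cons_mem_zTrees_iff hm.2 (Finset.mem_of_mem_erase hc)).1 h, rfl, rfl, rfl⟩
  · rintro (⟨a, C, h, rfl, rfl, rfl⟩ | ⟨c, hc, a, C, us, h, rfl, rfl, rfl⟩)
    · exact (graft_nil_mem_zTrees_iff hm).2 h
    · exact (graft_cons_mem_zTrees_iff hm.2 (Finset.mem_of_mem_erase hc)).2 h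

theorem ncard_biUnion_prependLeaf (hm : IsLeast (S : Set ℕ) m) (k : ℕ) :
    (⋃ c ∈ (S.erase m : Set ℕ),
        prependLeaf c '' (graft m ⁻¹' zTrees (S.erase c) (k + 1))).ncard =
      ∑ c ∈ S.erase m, (zTrees (S.erase c) (k + 1)).ncard := by
  have isLeast_erase (c : ℕ) (hc : c ∈ S.erase m) : IsLeast (S.erase c : Set ℕ) m :=
    ⟨Finset.mem_erase.2 ⟨(Finset.ne_of_mem_erase hc).symm, hm.1⟩,
      fun x hx => hm.2 (Finset.mem_of_mem_erase hx)⟩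
  rw [(S.erase m).finite_toSet.ncard_biUnion, finsum_mem_coe_finset]
  · refine Finset.sum_congr rfl fun c hc => ?_
    rw [Set.ncard_image_of_injective _ (prependLeaf_injective c),
      ncard_preimage_graft (isLeast_erase c hc)]
  · exact fun c hc => (finite_preimage_graft (isLeast_erase c hc).2).image _
  · exact fun c _ d _ hcd => Set.disjoint_image_image fun x _ y _ => by simp [prependLeaf, hcd]

theorem ncard_zTrees_succ (hm : IsLeast (S : Set ℕ) m) (k : ℕ) :
    (zTrees S (k + 1)).ncard = ∑ c ∈ S.erase m, (zTrees (S.erase c) (k + 1)).ncard +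
      ((S.erase m).card + k) * (zTrees (S.erase m) k).ncard := by
  have hfinite := finite_preimage_graft (k := k + 1) hm.2
  rw [preimage_graft_eq_union hm, Set.finite_union] at hfinite
  rw [← ncard_preimage_graft hm, preimage_graft_eq_union hm,
    Set.ncard_union_eq _ hfinite.1 hfinite.2, ncard_biUnion_prependLeaf hm,
    Set.ncard_image_of_injective, ncard_leafPlaces, add_comm]
  · exact fun x y => by simp [Prod.ext_iff]
  · simp only [Set.disjoint_iUnion_right]
    exact fun c _ => Set.disjoint_image_image fun x _ y _ => by simp [prependLeaf]

end OTree

open OTree in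
theorem z_recursion_general (n k : ℕ) :
    Nat.card {T // MemZ T (n + 1) (k + 1)} =
      (n + 1) * Nat.card {T // MemZ T n (k + 1)} + (n + 1 + k) * Nat.card {T // MemZ T n k} := by
  have hz (n k : ℕ) : Nat.card {T // MemZ T n k} = (zTrees (Finset.range (n + 1)) k).ncard :=
    Nat.card_congr (Equiv.subtypeEquivRight fun _ => memZ_iff_mem_zTrees)
  have hm : IsLeast (Finset.range (n + 2) : Set ℕ) 0 := ⟨by simp, fun _ _ => Nat.zero_le _⟩
  have herase (c : ℕ) (hc : c ∈ Finset.range (n + 2)) (k : ℕ) :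
      (zTrees ((Finset.range (n + 2)).erase c) k).ncard = (zTrees (Finset.range (n + 1)) k).ncard :=
    ncard_zTrees_erase_range (Nat.lt_succ_iff.1 (Finset.mem_range.1 hc)) k
  have hcard : ((Finset.range (n + 2)).erase 0).card = n + 1 := by simp
  rw [hz, hz, hz, ncard_zTrees_succ hm, hcard, herase 0 hm.1,
    Finset.sum_congr rfl fun c hc => herase c (Finset.mem_of_mem_erase hc) (k + 1),
    Finset.sum_const, hcard, smul_eq_mul]

/-- The numbers `z(n,k) = |Z_{n,k}|` satisfy the recursion
`z(n,k) = n·z(n-1,k) + (n+k-1)·z(n-1,k-1)` for `1 ≤ k < n`. -/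
theorem z_recursion (n k : ℕ) (hk : 1 ≤ k) (hkn : k < n) :
    Nat.card {T : OTree // MemZ T n k} =
      n * Nat.card {T : OTree // MemZ T (n - 1) k} +
        (n + k - 1) * Nat.card {T : OTree // MemZ T (n - 1) (k - 1)} := by
  rcases n with _ | n
  · omega
  rcases k with _ | k
  · omega
  exact z_recursion_general n k
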